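/- For every first-order theory Φ and every ground normal logic program P, ι_EB(Φ,P) ≡ᴱ ι_EH(Φ,P), i.e., Φ ∪ τ_EB(P) and Φ ∪ τ_EH(P) have exactly the same stableᴱ expansions. -/

import Mathlib

set_option autoImplicit false

/-! # First-order autoepistemic logic (FO-AEL): syntax -/

structure Sig : Type 1 where
  Func : Type
  Pred : Type
  arF : Func → ℕ
  arP : Pred → ℕ

inductive Term (S : Sig) : Type
  | var : ℕ → Term S
  | func : (f : S.Func) → (Fin (S.arF f) → Term S) → Term S

inductive Formula (S : Sig) : Type
  | atom : (p : S.Pred) → (Fin (S.arP p) → Term S) → Formula S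
  | eq : Term S → Term S → Formula S
  | not : Formula S → Formula S
  | and : Formula S → Formula S → Formula S
  | ex : ℕ → Formula S → Formula S
  | box : Formula S → Formula S

namespace Term

variable {S : Sig}

/-- A term is ground if it contains no variables; ground terms are the *names*. -/
def isGround : Term S → Prop
  | var _ => False
  | func _ ts => ∀ i, (ts i).isGround

def hasVar (x : ℕ) : Term S → Prop
  | var y => y = x
  | func _ ts => ∃ i, (ts i).hasVar x

/-- Application of a partial (name) substitution to a term. -/
def subst (β : ℕ → Option (Term S)) : Term S → Term S
  | var x => (β x).getD (var x)
  | func f ts => func f (fun i => (ts i).subst β)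

/-- The function symbols occurring in a term. -/
def funcs : Term S → Set S.Func
  | var _ => ∅
  | func f ts => insert f (⋃ i, (ts i).funcs)

/-- `t` is a name (ground term) over the set `F` of function symbols. -/
def isNameOf (F : Set S.Func) : Term S → Prop
  | var _ => False
  | func f ts => f ∈ F ∧ ∀ i, (ts i).isNameOf F

end Term

namespace Formula

variable {S : Sig}

/-- A formula is objective if it is 𝖫-free. -/
def isObjective : Formula S → Prop
  | atom _ _ => True
  | eq _ _ => True
  | not φ => φ.isObjective
  | and φ ψ => φ.isObjective ∧ ψ.isObjective
  | ex _ φ => φ.isObjective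
  | box _ => False

def isGround : Formula S → Prop
  | atom _ ts => ∀ i, (ts i).isGround
  | eq t₁ t₂ => t₁.isGround ∧ t₂.isGround
  | not φ => φ.isGround
  | and φ ψ => φ.isGround ∧ ψ.isGround
  | ex _ _ => False
  | box φ => φ.isGround

def isAtomic : Formula S → Prop
  | atom _ _ => True
  | eq _ _ => True
  | not _ => False
  | and _ _ => False
  | ex _ _ => False
  | box _ => False

/-- The modal operator 𝖫 occurs only applied to (objective) atomic formulas. -/
def boxAtomic : Formula S → Prop
  | atom _ _ => True
  | eq _ _ => True
  | not φ => φ.boxAtomic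
  | and φ ψ => φ.boxAtomic ∧ ψ.boxAtomic
  | ex _ φ => φ.boxAtomic
  | box φ => φ.isAtomic

/-- Propositional formulas: built from 0-ary predicates only. -/
def isPropositional : Formula S → Prop
  | atom p _ => S.arP p = 0
  | eq _ _ => False
  | not φ => φ.isPropositional
  | and φ ψ => φ.isPropositional ∧ ψ.isPropositional
  | ex _ _ => False
  | box _ => False

def freeIn (x : ℕ) : Formula S → Prop
  | atom _ ts => ∃ i, (ts i).hasVar x
  | eq t₁ t₂ => t₁.hasVar x ∨ t₂.hasVar x
  | not φ => φ.freeIn x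
  | and φ ψ => φ.freeIn x ∨ ψ.freeIn x
  | ex y φ => x ≠ y ∧ φ.freeIn x
  | box φ => φ.freeIn x

/-- A formula is closed (a sentence) if it has no free variables. -/
def closed (φ : Formula S) : Prop := ∀ x, ¬ φ.freeIn x

/-- Capture-avoiding application of a partial name substitution (values are ground). -/
def subst (β : ℕ → Option (Term S)) : Formula S → Formula S
  | atom p ts => atom p (fun i => (ts i).subst β)
  | eq t₁ t₂ => eq (t₁.subst β) (t₂.subst β)
  | not φ => not (φ.subst β)
  | and φ ψ => and (φ.subst β) (ψ.subst β)
  | ex y φ => ex y (φ.subst (fun z => if z = y then none else β z))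
  | box φ => box (φ.subst β)

def funcs : Formula S → Set S.Func
  | atom _ ts => ⋃ i, (ts i).funcs
  | eq t₁ t₂ => t₁.funcs ∪ t₂.funcs
  | not φ => φ.funcs
  | and φ ψ => φ.funcs ∪ ψ.funcs
  | ex _ φ => φ.funcs
  | box φ => φ.funcs

def preds : Formula S → Set S.Pred
  | atom p _ => {p}
  | eq _ _ => ∅
  | not φ => φ.preds
  | and φ ψ => φ.preds ∪ ψ.preds
  | ex _ φ => φ.preds
  | box φ => φ.preds

/-- `φ ∨ ψ` as an abbreviation: `¬(¬φ ∧ ¬ψ)`. -/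
def or (φ ψ : Formula S) : Formula S := not (and (not φ) (not ψ))

/-- `φ ⊃ ψ` as an abbreviation: `¬(φ ∧ ¬ψ)`. -/
def imp (φ ψ : Formula S) : Formula S := not (and φ (not ψ))

/-- `∀x.φ` as an abbreviation: `¬∃x.¬φ`. -/
def all (x : ℕ) (φ : Formula S) : Formula S := not (ex x (not φ))

end Formula

/-! ## Semantics -/

structure Interp (S : Sig) where
  U : Type
  nonempty : Nonempty U
  interpF : (f : S.Func) → (Fin (S.arF f) → U) → U
  interpP : (p : S.Pred) → (Fin (S.arP p) → U) → Prop

noncomputable def Interp.dflt {S : Sig} (w : Interp S) : w.U := Classical.choice w.nonempty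

def Term.eval {S : Sig} (w : Interp S) (B : ℕ → w.U) : Term S → w.U
  | Term.var x => B x
  | Term.func f ts => w.interpF f (fun i => (ts i).eval w B)

/-- Evaluation of a ground term (the assignment is irrelevant). -/
noncomputable def Term.evalG {S : Sig} (w : Interp S) (t : Term S) : w.U :=
  t.eval w (fun _ => w.dflt)

/-- An individual is named if some name (ground term) denotes it. -/
def IsNamed {S : Sig} (w : Interp S) (k : w.U) : Prop :=
  ∃ t : Term S, t.isGround ∧ Term.evalG w t = k

/-- A name substitution `β` is associated with the variable assignment `B`:
its domain is exactly the set of variables whose `B`-value is named, and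
it assigns to each such variable a name denoting its `B`-value. -/
def Assoc {S : Sig} (w : Interp S) (B : ℕ → w.U) (β : ℕ → Option (Term S)) : Prop :=
  ∀ x : ℕ,
    (IsNamed w (B x) → (β x).isSome) ∧
    (∀ t : Term S, β x = some t → t.isGround ∧ Term.evalG w t = B x)

/-- The two semantics: any-name (E) and all-name (A). -/
inductive Sem : Type
  | any
  | all

/-- Satisfaction of a formula in an autoepistemic interpretation `⟨w,Γ⟩`
under a variable assignment, for the any-name (E) resp. all-name (A) semantics. -/
def Sat {S : Sig} (X : Sem) (w : Interp S) (Γ : Set (Formula S)) :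
    Formula S → (ℕ → w.U) → Prop
  | Formula.atom p ts, B => w.interpP p (fun i => (ts i).eval w B)
  | Formula.eq t₁ t₂, B => t₁.eval w B = t₂.eval w B
  | Formula.not φ, B => ¬ Sat X w Γ φ B
  | Formula.and φ ψ, B => Sat X w Γ φ B ∧ Sat X w Γ ψ B
  | Formula.ex x φ, B => ∃ u : w.U, Sat X w Γ φ (Function.update B x u)
  | Formula.box φ, B =>
      match X with
      | Sem.any => ∃ β, Assoc w B β ∧ (φ.subst β).closed ∧ φ.subst β ∈ Γ
      | Sem.all => ∀ β, Assoc w B β → (φ.subst β).closed ∧ φ.subst β ∈ Γ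

def ModelsF {S : Sig} (X : Sem) (w : Interp S) (Γ : Set (Formula S)) (φ : Formula S) : Prop :=
  ∀ B : ℕ → w.U, Sat X w Γ φ B

def ModelsT {S : Sig} (X : Sem) (w : Interp S) (Γ Φ : Set (Formula S)) : Prop :=
  ∀ φ ∈ Φ, ModelsF X w Γ φ

/-- `Φ ⊨ˣ_Γ φ`. -/
def Entails {S : Sig} (X : Sem) (Φ Γ : Set (Formula S)) (φ : Formula S) : Prop :=
  ∀ w : Interp S, ModelsT X w Γ Φ → ModelsF X w Γ φ

/-- The standard names assumption: all names are interpreted distinctly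
and every individual is named. -/
def SNA {S : Sig} (w : Interp S) : Prop :=
  (∀ t₁ t₂ : Term S, t₁.isGround → t₂.isGround → Term.evalG w t₁ = Term.evalG w t₂ → t₁ = t₂) ∧
  (∀ k : w.U, IsNamed w k)

/-- Entailment restricted to interpretations satisfying the standard names assumption. -/
def EntailsSN {S : Sig} (X : Sem) (Φ Γ : Set (Formula S)) (φ : Formula S) : Prop :=
  ∀ w : Interp S, SNA w → ModelsT X w Γ Φ → ModelsF X w Γ φ

/-- `T` is a stableˣ expansion of `Φ`. -/
def StableExp {S : Sig} (X : Sem) (Φ T : Set (Formula S)) : Prop :=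
  T = {φ | Entails X Φ T φ}

def objOf {S : Sig} (T : Set (Formula S)) : Set (Formula S) :=
  {φ ∈ T | φ.isObjective}

def ogOf {S : Sig} (T : Set (Formula S)) : Set (Formula S) :=
  {φ ∈ T | φ.isObjective ∧ φ.isGround}

def ogaOf {S : Sig} (T : Set (Formula S)) : Set (Formula S) :=
  {φ ∈ T | φ.isObjective ∧ φ.isGround ∧ φ.isAtomic}

def Consistent {S : Sig} (T : Set (Formula S)) : Prop := T ≠ Set.univ

/-- `Φ₁ ≡ˣ Φ₂`: same stableˣ expansions. -/
def ExpEquiv {S : Sig} (X : Sem) (Φ₁ Φ₂ : Set (Formula S)) : Prop :=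
  ∀ T, StableExp X Φ₁ T ↔ StableExp X Φ₂ T

/-- `Φ₁ ≡ˣ_γ Φ₂` for a selector `sel` (e.g. `ogaOf`): the stableˣ expansions
correspond with respect to `sel`. -/
def ExpEquivSel {S : Sig} (X : Sem) (sel : Set (Formula S) → Set (Formula S))
    (Φ₁ Φ₂ : Set (Formula S)) : Prop :=
  (∀ T, StableExp X Φ₁ T → ∃ T', StableExp X Φ₂ T' ∧ sel T = sel T') ∧
  (∀ T', StableExp X Φ₂ T' → ∃ T, StableExp X Φ₁ T ∧ sel T = sel T')

/-- Autoepistemicˣ consequences of `Φ`. -/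
def Cn {S : Sig} (X : Sem) (Φ : Set (Formula S)) : Set (Formula S) :=
  {φ | ∀ T, StableExp X Φ T → φ ∈ T}

def CnO {S : Sig} (X : Sem) (Φ : Set (Formula S)) : Set (Formula S) :=
  {φ ∈ Cn X Φ | φ.isObjective}

def CnOg {S : Sig} (X : Sem) (Φ : Set (Formula S)) : Set (Formula S) :=
  {φ ∈ Cn X Φ | φ.isObjective ∧ φ.isGround}

/-! ## Logic programs -/

structure PAtom (S : Sig) where
  p : S.Pred
  args : Fin (S.arP p) → Term S

namespace PAtom

variable {S : Sig}

def toFormula (a : PAtom S) : Formula S := Formula.atom a.p a.args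

def isGround (a : PAtom S) : Prop := ∀ i, (a.args i).isGround

def hasVar (x : ℕ) (a : PAtom S) : Prop := ∃ i, (a.args i).hasVar x

def substA (σ : ℕ → Term S) (a : PAtom S) : PAtom S :=
  ⟨a.p, fun i => (a.args i).subst (fun x => some (σ x))⟩

def funcs (a : PAtom S) : Set S.Func := ⋃ i, (a.args i).funcs

end PAtom

/-- A (disjunctive) rule `h₁ | … | h_l ← b₁,…,b_m, not c₁,…,not c_n`,
together with a list of the variables occurring in it. -/
structure Rule (S : Sig) where
  head : List (PAtom S)
  pos : List (PAtom S)
  neg : List (PAtom S)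
  vars : List ℕ

namespace Rule

variable {S : Sig}

def atoms (r : Rule S) : List (PAtom S) := r.head ++ r.pos ++ r.neg

def hasVar (x : ℕ) (r : Rule S) : Prop := ∃ a ∈ r.atoms, PAtom.hasVar x a

/-- Well-formedness: at least one head atom, and `vars` lists all variables of the rule. -/
def wf (r : Rule S) : Prop := r.head ≠ [] ∧ ∀ x, r.hasVar x → x ∈ r.vars

def isNormal (r : Rule S) : Prop := r.head.length = 1

def isGround (r : Rule S) : Prop := (∀ a ∈ r.atoms, a.isGround) ∧ r.vars = []

def isSafe (r : Rule S) : Prop := ∀ x, r.hasVar x → ∃ a ∈ r.pos, PAtom.hasVar x a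

def isPositive (r : Rule S) : Prop := r.neg = []

def applySubst (σ : ℕ → Term S) (r : Rule S) : Rule S :=
  ⟨r.head.map (PAtom.substA σ), r.pos.map (PAtom.substA σ), r.neg.map (PAtom.substA σ), []⟩

end Rule

abbrev Program (S : Sig) := Set (Rule S)

def progWf {S : Sig} (P : Program S) : Prop := ∀ r ∈ P, r.wf
def progNormal {S : Sig} (P : Program S) : Prop := ∀ r ∈ P, r.isNormal
def progGround {S : Sig} (P : Program S) : Prop := ∀ r ∈ P, r.isGround
def progSafe {S : Sig} (P : Program S) : Prop := ∀ r ∈ P, r.isSafe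
def progPositive {S : Sig} (P : Program S) : Prop := ∀ r ∈ P, r.isPositive

/-- The function symbols occurring in `P` (part of the signature `Σ_P`). -/
def progFuncs {S : Sig} (P : Program S) : Set S.Func :=
  {f | ∃ r ∈ P, ∃ a ∈ r.atoms, f ∈ a.funcs}

/-- The predicate symbols occurring in `P` (part of the signature `Σ_P`). -/
def progPreds {S : Sig} (P : Program S) : Set S.Pred :=
  {q | ∃ r ∈ P, ∃ a ∈ r.atoms, a.p = q}

/-- The ambient signature is exactly the signature `Σ_P` of `P`. -/
def fullSig {S : Sig} (P : Program S) : Prop :=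
  (∀ f : S.Func, f ∈ progFuncs P) ∧ (∀ q : S.Pred, q ∈ progPreds P)

/-- Standing assumption: `Σ_P` contains a 0-ary function symbol whenever it
has a predicate symbol of arity greater than 0. -/
def goodSig {S : Sig} (P : Program S) : Prop :=
  (∃ q ∈ progPreds P, 0 < S.arP q) → ∃ f ∈ progFuncs P, S.arF f = 0

/-! ## Embeddings of logic programs into FO-AEL -/

def andAll {S : Sig} : Formula S → List (Formula S) → Formula S
  | φ, [] => φ
  | φ, ψ :: rest => andAll (Formula.and φ ψ) rest

def orAll {S : Sig} : Formula S → List (Formula S) → Formula S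
  | φ, [] => φ
  | φ, ψ :: rest => orAll (Formula.or φ ψ) rest

/-- `impOf ants c` is `⋀ ants ⊃ c` (just `c` if there are no antecedents). -/
def impOf {S : Sig} : List (Formula S) → Formula S → Formula S
  | [], c => c
  | a :: rest, c => Formula.imp (andAll a rest) c

/-- Disjunction of a nonempty list (junk value on the empty list,
which is excluded by rule well-formedness). -/
def disjOf {S : Sig} : List (Formula S) → Formula S
  | [] => Formula.eq (Term.var 0) (Term.var 0)
  | h :: rest => orAll h rest

/-- Universal uclosure over the listed variables. -/
def uclosure {S : Sig} (vs : List ℕ) (φ : Formula S) : Formula S :=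
  vs.foldr Formula.all φ

def bodyHP {S : Sig} (r : Rule S) : List (Formula S) :=
  r.pos.map PAtom.toFormula ++ r.neg.map (fun c => Formula.not (Formula.box c.toFormula))

def bodyE {S : Sig} (r : Rule S) : List (Formula S) :=
  r.pos.map (fun b => Formula.and b.toFormula (Formula.box b.toFormula)) ++
    r.neg.map (fun c => Formula.not (Formula.box c.toFormula))

/-- `τ_HP(r)` resp. `τ^∨_HP(r)`. -/
def embHP {S : Sig} (r : Rule S) : Formula S :=
  uclosure r.vars (impOf (bodyHP r) (disjOf (r.head.map PAtom.toFormula)))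

/-- `τ_EB(r)` resp. `τ^∨_EB(r)`. -/
def embEB {S : Sig} (r : Rule S) : Formula S :=
  uclosure r.vars (impOf (bodyE r) (disjOf (r.head.map PAtom.toFormula)))

/-- `τ_EH(r)` resp. `τ^∨_EH(r)`. -/
def embEH {S : Sig} (r : Rule S) : Formula S :=
  uclosure r.vars (impOf (bodyE r)
    (disjOf (r.head.map (fun h => Formula.and h.toFormula (Formula.box h.toFormula)))))

/-- The unique-names axioms `¬𝖫(t₁=t₂) ⊃ t₁≠t₂` for distinct names of `Σ_P`. -/
def UNAax {S : Sig} (P : Program S) : Set (Formula S) :=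
  {φ | ∃ t₁ t₂ : Term S, t₁.isNameOf (progFuncs P) ∧ t₂.isNameOf (progFuncs P) ∧ t₁ ≠ t₂ ∧
        φ = Formula.imp (Formula.not (Formula.box (Formula.eq t₁ t₂)))
              (Formula.not (Formula.eq t₁ t₂))}

/-- The positive introspection axioms `α ⊃ 𝖫α` for objective ground atoms of `Σ_P`. -/
def PIAax {S : Sig} (P : Program S) : Set (Formula S) :=
  {φ | ∃ a : PAtom S, a.p ∈ progPreds P ∧ (∀ i, (a.args i).isNameOf (progFuncs P)) ∧
        φ = Formula.imp a.toFormula (Formula.box a.toFormula)}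

def ruleEmb {S : Sig} (emb : Rule S → Formula S) (P : Program S) : Set (Formula S) :=
  {φ | ∃ r ∈ P, φ = emb r}

def tauHP {S : Sig} (P : Program S) : Set (Formula S) := ruleEmb embHP P ∪ UNAax P
def tauEB {S : Sig} (P : Program S) : Set (Formula S) := ruleEmb embEB P ∪ UNAax P
def tauEH {S : Sig} (P : Program S) : Set (Formula S) := ruleEmb embEH P ∪ UNAax P
def tauHPv {S : Sig} (P : Program S) : Set (Formula S) := ruleEmb embHP P ∪ PIAax P ∪ UNAax P
def tauEBv {S : Sig} (P : Program S) : Set (Formula S) := ruleEmb embEB P ∪ PIAax P ∪ UNAax P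
def tauEHv {S : Sig} (P : Program S) : Set (Formula S) := ruleEmb embEH P ∪ UNAax P
def tauHPminus {S : Sig} (P : Program S) : Set (Formula S) := ruleEmb embHP P
def tauEHvminus {S : Sig} (P : Program S) : Set (Formula S) := ruleEmb embEH P

/-! ## Grounding and stable models -/

/-- The grounding of `P`: all ground instantiations of rules of `P`
obtained by replacing variables with names of `Σ_P`. -/
def grP {S : Sig} (P : Program S) : Program S :=
  {r' | ∃ r ∈ P, ∃ σ : ℕ → Term S,
        (∀ x, r.hasVar x → (σ x).isNameOf (progFuncs P)) ∧ r' = Rule.applySubst σ r}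

/-- A Herbrand interpretation: a set of ground atomic formulas. -/
def HerbrandI {S : Sig} (M : Set (Formula S)) : Prop :=
  ∀ φ ∈ M, φ.isAtomic ∧ φ.isGround

/-- `M` is a Herbrand model of the positive ground program `Q` (relative to the
names of `Σ_P`): rules are satisfied and `t = t ∈ M` for every name `t`. -/
def HerbrandModelOf {S : Sig} (P Q : Program S) (M : Set (Formula S)) : Prop :=
  HerbrandI M ∧
  (∀ r ∈ Q, (∀ b ∈ r.pos, PAtom.toFormula b ∈ M) → ∃ h ∈ r.head, PAtom.toFormula h ∈ M) ∧
  (∀ t : Term S, t.isNameOf (progFuncs P) → Formula.eq t t ∈ M)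

/-- The Gelfond–Lifschitz reduct of `gr(P)` with respect to `M`. -/
def reduct {S : Sig} (P : Program S) (M : Set (Formula S)) : Program S :=
  {r' | ∃ r ∈ grP P, (∀ c ∈ r.neg, PAtom.toFormula c ∉ M) ∧
        r' = ⟨r.head, r.pos, [], r.vars⟩}

/-- `M` is a stable model of `P`: a minimal Herbrand model of the reduct of `gr(P)` w.r.t. `M`. -/
def isStableModel {S : Sig} (P : Program S) (M : Set (Formula S)) : Prop :=
  HerbrandModelOf P (reduct P M) M ∧
  ∀ M', M' ⊆ M → HerbrandModelOf P (reduct P M) M' → M' = M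

/-! ## First-order theories and classes thereof -/

/-- An FO theory: a set of objective sentences. -/
def FOTheory {S : Sig} (Φ : Set (Formula S)) : Prop :=
  ∀ φ ∈ Φ, φ.isObjective ∧ φ.closed

def theoryFuncs {S : Sig} (Φ : Set (Formula S)) : Set S.Func := {f | ∃ φ ∈ Φ, f ∈ φ.funcs}
def theoryPreds {S : Sig} (Φ : Set (Formula S)) : Set S.Pred := {q | ∃ φ ∈ Φ, q ∈ φ.preds}

/-- The ambient signature is exactly the union of the signatures of `Φ` and `P`. -/
def CoverSig {S : Sig} (Φ : Set (Formula S)) (P : Program S) : Prop :=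
  (∀ f : S.Func, f ∈ theoryFuncs Φ ∪ progFuncs P) ∧
  (∀ q : S.Pred, q ∈ theoryPreds Φ ∪ progPreds P)

def exClosure {S : Sig} (ys : List ℕ) (φ : Formula S) : Formula S := ys.foldr Formula.ex φ

/-- A Horn sentence `(∀)(b₁ ∧ … ∧ b_n ⊃ h)` with atomic `b_i`, `h`
(the consequent `h` may be absent). -/
def isHornSentence {S : Sig} (φ : Formula S) : Prop :=
  ∃ (vs : List ℕ) (bs : List (Formula S)),
    (∀ b ∈ bs, b.isAtomic) ∧
    ((∃ h : Formula S, h.isAtomic ∧ φ = uclosure vs (impOf bs h)) ∨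
     (∃ b rest, bs = b :: rest ∧ φ = uclosure vs (Formula.not (andAll b rest))))

def HornTheory {S : Sig} (Φ : Set (Formula S)) : Prop :=
  FOTheory Φ ∧ ∀ φ ∈ Φ, isHornSentence φ

/-- A generalized Horn sentence `(∀)(b₁ ∧ … ∧ b_n ⊃ ∃ȳ.h)` with atomic `b_i`, `h`,
the variables `ȳ` occurring only in `h` (the consequent may be absent). -/
def isGHornSentence {S : Sig} (φ : Formula S) : Prop :=
  ∃ (vs : List ℕ) (bs : List (Formula S)),
    (∀ b ∈ bs, b.isAtomic) ∧
    ((∃ (ys : List ℕ) (h : Formula S), h.isAtomic ∧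
        (∀ y ∈ ys, ∀ b ∈ bs, ¬ b.freeIn y) ∧
        φ = uclosure vs (impOf bs (exClosure ys h))) ∨
     (∃ b rest, bs = b :: rest ∧ φ = uclosure vs (Formula.not (andAll b rest))))

def GHornTheory {S : Sig} (Φ : Set (Formula S)) : Prop :=
  FOTheory Φ ∧ ∀ φ ∈ Φ, isGHornSentence φ

def PropTheory {S : Sig} (Φ : Set (Formula S)) : Prop :=
  FOTheory Φ ∧ ∀ φ ∈ Φ, φ.isPropositional

/-! Fix a candidate belief set `T`. Every modal atom in a ground rule has a truth value that depends
on `T` alone, so `τ_EB(r)` and `τ_EH(r)` differ only when the body of `r` is believed, in which case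
the latter requires its head `h` to be a member of `T` in addition to being true. This is automatic
when `T` is a stable expansion of a theory entailing `τ_EB(r)`: the positive body atoms lie in `T`,
hence are true in all models of the theory, hence so is `h`, hence `h ∈ T`. Thus, relative to a
stable expansion of either combination, the two combinations have the same models. -/

section Ground

variable {S : Sig}

theorem Term.isGround.subst_eq_self {t : Term S} (ht : t.isGround) (β : ℕ → Option (Term S)) :
    t.subst β = t := by
  induction t with
  | var x => exact ht.elim
  | func f ts ih => exact congrArg (Term.func f) (funext fun i => ih i (ht i))

theorem Term.isGround.not_hasVar {t : Term S} (ht : t.isGround) (x : ℕ) : ¬ t.hasVar x := by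
  induction t with
  | var y => exact ht.elim
  | func f ts ih => exact fun ⟨i, hi⟩ => ih i (ht i) hi

theorem Formula.isGround.subst_eq_self {φ : Formula S} (hφ : φ.isGround) (β : ℕ → Option (Term S)) :
    φ.subst β = φ := by
  induction φ with
  | atom p ts => exact congrArg (Formula.atom p) (funext fun i => (hφ i).subst_eq_self β)
  | eq t₁ t₂ => exact congrArg₂ Formula.eq (hφ.1.subst_eq_self β) (hφ.2.subst_eq_self β)
  | not φ ih => exact congrArg Formula.not (ih hφ)
  | and φ ψ ihφ ihψ => exact congrArg₂ Formula.and (ihφ hφ.1) (ihψ hφ.2)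
  | ex x φ => exact hφ.elim
  | box φ ih => exact congrArg Formula.box (ih hφ)

theorem Formula.isGround.closed {φ : Formula S} (hφ : φ.isGround) : φ.closed := by
  intro x
  induction φ with
  | atom p ts => exact fun ⟨i, hi⟩ => (hφ i).not_hasVar x hi
  | eq t₁ t₂ => exact not_or.2 ⟨hφ.1.not_hasVar x, hφ.2.not_hasVar x⟩
  | not φ ih => exact ih hφ
  | and φ ψ ihφ ihψ => exact not_or.2 ⟨ihφ hφ.1, ihψ hφ.2⟩
  | ex x φ => exact hφ.elim
  | box φ ih => exact ih hφ

end Ground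

section Satisfaction

variable {S : Sig} {X : Sem} {w : Interp S} {T : Set (Formula S)} {B : ℕ → w.U}

theorem exists_assoc (w : Interp S) (B : ℕ → w.U) : ∃ β, Assoc w B β := by
  classical
  refine ⟨fun x => if h : IsNamed w (B x) then some h.choose else none, fun x => ?_⟩
  by_cases h : IsNamed w (B x)
  · simpa [h] using h.choose_spec
  · simp [h]

theorem sat_not {φ : Formula S} : Sat X w T φ.not B ↔ ¬ Sat X w T φ B :=
  Iff.rfl

theorem sat_and {φ ψ : Formula S} : Sat X w T (φ.and ψ) B ↔ Sat X w T φ B ∧ Sat X w T ψ B :=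
  Iff.rfl

theorem sat_imp {φ ψ : Formula S} :
    Sat X w T (φ.imp ψ) B ↔ (Sat X w T φ B → Sat X w T ψ B) := by
  simp only [Formula.imp, sat_not, sat_and, not_and, not_not]

theorem sat_andAll {φ : Formula S} {l : List (Formula S)} :
    Sat X w T (andAll φ l) B ↔ Sat X w T φ B ∧ ∀ ψ ∈ l, Sat X w T ψ B := by
  induction l generalizing φ with
  | nil => simp [andAll]
  | cons ψ l ih => simp [andAll, ih, sat_and, and_assoc]

theorem sat_impOf {l : List (Formula S)} {φ : Formula S} :
    Sat X w T (impOf l φ) B ↔ ((∀ ψ ∈ l, Sat X w T ψ B) → Sat X w T φ B) := by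
  cases l with
  | nil => simp [impOf]
  | cons ψ l => simp [impOf, sat_imp, sat_andAll]

theorem sat_box_iff_mem {φ : Formula S} (hφ : φ.isGround) : Sat X w T φ.box B ↔ φ ∈ T := by
  have hclosed : φ.closed := hφ.closed
  obtain ⟨β, hβ⟩ := exists_assoc w B
  cases X with
  | any =>
    simp only [Sat, hφ.subst_eq_self]
    exact ⟨fun ⟨_, _, _, hmem⟩ => hmem, fun hmem => ⟨β, hβ, hclosed, hmem⟩⟩
  | all =>
    simp only [Sat, hφ.subst_eq_self]
    exact ⟨fun h => (h β hβ).2, fun hmem _ _ => ⟨hclosed, hmem⟩⟩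

theorem modelsT_union {Φ Ψ : Set (Formula S)} :
    ModelsT X w T (Φ ∪ Ψ) ↔ ModelsT X w T Φ ∧ ModelsT X w T Ψ := by
  simp only [ModelsT, Set.mem_union, or_imp, forall_and]

theorem modelsT_ruleEmb {emb : Rule S → Formula S} {P : Program S} :
    ModelsT X w T (ruleEmb emb P) ↔ ∀ r ∈ P, ModelsF X w T (emb r) :=
  ⟨fun h r hr => h _ ⟨r, hr, rfl⟩, by rintro h _ ⟨r, hr, rfl⟩; exact h r hr⟩

end Satisfaction

section Rules

variable {S : Sig} {X : Sem} {w : Interp S} {T : Set (Formula S)} {r : Rule S}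

/-- The belief set `T` accepts the body of `r`: this is the part of the body of `τ_EB(r)` and
`τ_EH(r)` made up of modal atoms, whose truth for ground `r` does not depend on the first-order
interpretation. -/
def Rule.BodyBelieved (T : Set (Formula S)) (r : Rule S) : Prop :=
  (∀ b ∈ r.pos, b.toFormula ∈ T) ∧ ∀ c ∈ r.neg, c.toFormula ∉ T

theorem forall_sat_bodyE_iff {B : ℕ → w.U} (hr : r.isGround) :
    (∀ φ ∈ bodyE r, Sat X w T φ B) ↔
      r.BodyBelieved T ∧ ∀ b ∈ r.pos, Sat X w T b.toFormula B := by
  have sat_box_pos : ∀ b ∈ r.pos, (Sat X w T b.toFormula.box B ↔ b.toFormula ∈ T) :=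
    fun b hb => sat_box_iff_mem (hr.1 b (by simp [Rule.atoms, hb]))
  have sat_box_neg : ∀ c ∈ r.neg, (Sat X w T c.toFormula.box B ↔ c.toFormula ∈ T) :=
    fun c hc => sat_box_iff_mem (hr.1 c (by simp [Rule.atoms, hc]))
  simp only [bodyE, List.forall_mem_append, List.forall_mem_map, sat_and, sat_not,
    Rule.BodyBelieved]
  grind

theorem sat_embEB_iff {B : ℕ → w.U} {h : PAtom S} (hr : r.isGround) (hhead : r.head = [h]) :
    Sat X w T (embEB r) B ↔
      (r.BodyBelieved T → (∀ b ∈ r.pos, Sat X w T b.toFormula B) →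
        Sat X w T h.toFormula B) := by
  rw [← and_imp, ← forall_sat_bodyE_iff hr, ← sat_impOf]
  simp [embEB, hr.2, uclosure, hhead, disjOf, orAll]

theorem sat_embEH_iff {B : ℕ → w.U} {h : PAtom S} (hr : r.isGround) (hhead : r.head = [h]) :
    Sat X w T (embEH r) B ↔
      (r.BodyBelieved T → (∀ b ∈ r.pos, Sat X w T b.toFormula B) →
        Sat X w T h.toFormula B ∧ h.toFormula ∈ T) := by
  have hh : h.toFormula.isGround := hr.1 h (by simp [Rule.atoms, hhead])
  rw [← sat_box_iff_mem (X := X) (w := w) (B := B) hh, ← sat_and, ← and_imp,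
    ← forall_sat_bodyE_iff hr, ← sat_impOf]
  simp [embEH, hr.2, uclosure, hhead, disjOf, orAll]

theorem modelsF_embEB_of_embEH (hr : r.isGround) (hnormal : r.isNormal)
    (hw : ModelsF X w T (embEH r)) : ModelsF X w T (embEB r) := by
  obtain ⟨h, hhead⟩ := List.length_eq_one_iff.1 hnormal
  intro B
  rw [sat_embEB_iff hr hhead]
  exact fun hbel hpos => ((sat_embEH_iff hr hhead).1 (hw B) hbel hpos).1

end Rules

section StableExpansions

variable {S : Sig} {X : Sem} {T Φ Ψ : Set (Formula S)}

theorem StableExp.mem_iff (hT : StableExp X Ψ T) {φ : Formula S} :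
    φ ∈ T ↔ Entails X Ψ T φ :=
  Set.ext_iff.1 hT φ

theorem stableExp_congr (h : ∀ w, ModelsT X w T Φ ↔ ModelsT X w T Ψ) :
    StableExp X Φ T ↔ StableExp X Ψ T := by
  simp only [StableExp, Entails, h]

theorem StableExp.head_mem {r : Rule S} {h : PAtom S} (hT : StableExp X Ψ T) (hr : r.isGround)
    (hhead : r.head = [h]) (hent : Entails X Ψ T (embEB r)) (hbel : r.BodyBelieved T) :
    h.toFormula ∈ T := by
  refine hT.mem_iff.2 fun w hw B => ?_
  have hpos : ∀ b ∈ r.pos, Sat X w T b.toFormula B :=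
    fun b hb => hT.mem_iff.1 (hbel.1 b hb) w hw B
  exact (sat_embEB_iff hr hhead).1 (hent w hw B) hbel hpos

theorem StableExp.modelsF_embEB_iff_embEH {r : Rule S} {w : Interp S} (hT : StableExp X Ψ T)
    (hr : r.isGround) (hnormal : r.isNormal) (hent : Entails X Ψ T (embEB r)) :
    ModelsF X w T (embEB r) ↔ ModelsF X w T (embEH r) := by
  refine ⟨fun hw B => ?_, modelsF_embEB_of_embEH hr hnormal⟩
  obtain ⟨h, hhead⟩ := List.length_eq_one_iff.1 hnormal
  rw [sat_embEH_iff hr hhead]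
  exact fun hbel hpos =>
    ⟨(sat_embEB_iff hr hhead).1 (hw B) hbel hpos, hT.head_mem hr hhead hent hbel⟩

theorem StableExp.modelsT_tauEB_iff_tauEH {P : Program S} {w : Interp S} (hT : StableExp X Ψ T)
    (hnormal : progNormal P) (hground : progGround P) (hent : ∀ r ∈ P, Entails X Ψ T (embEB r)) :
    ModelsT X w T (Φ ∪ tauEB P) ↔ ModelsT X w T (Φ ∪ tauEH P) := by
  have hrules : (∀ r ∈ P, ModelsF X w T (embEB r)) ↔ ∀ r ∈ P, ModelsF X w T (embEH r) :=
    forall₂_congr fun r hr => hT.modelsF_embEB_iff_embEH (hground r hr) (hnormal r hr) (hent r hr)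
  simp only [tauEB, tauEH, modelsT_union, modelsT_ruleEmb, hrules]

end StableExpansions

theorem stmt15_general {S : Sig} (X : Sem) (Φ : Set (Formula S)) (P : Program S)
    (hnormal : progNormal P) (hground : progGround P) :
    ExpEquiv X (Φ ∪ tauEB P) (Φ ∪ tauEH P) := by
  intro T
  constructor
  · intro hT
    have hEB : ∀ r ∈ P, Entails X (Φ ∪ tauEB P) T (embEB r) :=
      fun r hr w hw => hw _ (.inr (.inl ⟨r, hr, rfl⟩))
    exact (stableExp_congr fun w => hT.modelsT_tauEB_iff_tauEH hnormal hground hEB).1 hT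
  · intro hT
    have hEB : ∀ r ∈ P, Entails X (Φ ∪ tauEH P) T (embEB r) := fun r hr w hw =>
      modelsF_embEB_of_embEH (hground r hr) (hnormal r hr) (hw _ (.inr (.inl ⟨r, hr, rfl⟩)))
    exact (stableExp_congr fun w => hT.modelsT_tauEB_iff_tauEH hnormal hground hEB).2 hT

/-- For every FO theory `Φ` and ground normal program `P`,
`Φ ∪ τ_EB(P)` and `Φ ∪ τ_EH(P)` have exactly the same stableᴱ expansions. -/
theorem stmt15 {S : Sig} (Φ : Set (Formula S)) (P : Program S)
    (hΦ : FOTheory Φ) (hwf : progWf P) (hnormal : progNormal P) (hground : progGround P)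
    (hgood : goodSig P) (hcov : CoverSig Φ P) :
    ExpEquiv Sem.any (Φ ∪ tauEB P) (Φ ∪ tauEH P) :=
  stmt15_general Sem.any Φ P hnormal hground
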